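/- Let S be a real symmetric d×d matrix of full rank with exactly m positive eigenvalues, ν a Borel probability measure on ℝ^d with finite second moment, γ ∈ Γ(ν), and G a maximal S-monotone set. Then: (i) γ-almost surely, ½S(x,x) ≤ ψ_G(x) ≤ E_γ[ψ_G(y) | x]; and (ii) ½∫S(x,y) dγ = ½∫S(x,x) dγ ≤ ∫ψ_G(y) dν(y). -/

import Mathlib

/-!
Fix `G` maximal `S`-monotone and write `ψ = fitz S G`. As a supremum of affine functions
`a_z(y) = S(z,y) - S(z,z)/2`, `z ∈ G`, it satisfies Jensen's inequality: if a probability `κ` has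
mean `x`, then `a_z(x) = ∫ a_z dκ ≤ ∫ ψ dκ` for each `z`, and one takes the supremum over `z`
(`fitz_le_eInt`). Maximality gives `S(y,y)/2 ≤ ψ(y)` for every `y` (`half_le_fitz`): for `y ∈ G`
take `z = y`, and for `y ∉ G` some `z ∈ G` has `S(y-z,y-z) < 0`, that is `a_z(y) > S(y,y)/2`.
The martingale property says that the disintegration kernel `κ_x` of `γ` has mean `x` for almost
every `x` (`ae_mean_condKernel`), which yields (i).

For (ii), `∫ S(x,y) dκ_x(y) = S(x,x)` almost surely, and integrating in `x` gives the equality. For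
the inequality, the negative part of `ψ` is `ν`-integrable because `ψ` has an affine minorant. If
`∫ ψ dν = +∞` there is nothing to prove; otherwise `ψ` is finite `ν`-a.e. and integrable, so
`∫ ψ dν = ∫ (∫ ψ dκ_x) dγ` and (i) can be integrated.
-/

open MeasureTheory Filter Set Matrix

noncomputable section

/-- The bilinear form of the matrix `S`: `S(x,y) = ⟨x, Sy⟩`. -/
def Sb {d : ℕ} (S : Matrix (Fin d) (Fin d) ℝ) (x y : Fin d → ℝ) : ℝ :=
  x ⬝ᵥ S.mulVec y

/-- A set `G` is `S`-monotone if `S(x-y,x-y) ≥ 0` for all `x, y ∈ G`. -/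
def SMono {d : ℕ} (S : Matrix (Fin d) (Fin d) ℝ) (G : Set (Fin d → ℝ)) : Prop :=
  ∀ x ∈ G, ∀ y ∈ G, 0 ≤ Sb S (x - y) (x - y)

/-- Maximal `S`-monotone set. -/
def MaxSMono {d : ℕ} (S : Matrix (Fin d) (Fin d) ℝ) (G : Set (Fin d → ℝ)) : Prop :=
  SMono S G ∧ ∀ H, SMono S H → G ⊆ H → H = G

/-- The Fitzpatrick function `ψ_G(y) = sup_{x∈G} (S(x,y) - S(x,x)/2)`, with values in
`ℝ ∪ {+∞}` (modeled in `EReal`). -/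
def fitz {d : ℕ} (S : Matrix (Fin d) (Fin d) ℝ) (G : Set (Fin d → ℝ))
    (y : Fin d → ℝ) : EReal :=
  ⨆ x ∈ G, ((Sb S x y - Sb S x x / 2 : ℝ) : EReal)

/-- Positive part of an extended real number, in `ℝ≥0∞`. -/
def epos (x : EReal) : ENNReal := if x = ⊤ then ⊤ else ENNReal.ofReal x.toReal

/-- Integral of an `EReal`-valued function: positive part minus negative part. -/
def eInt {α : Type*} [MeasurableSpace α] (μ : Measure α) (f : α → EReal) : EReal :=
  ((∫⁻ a, epos (f a) ∂μ : ENNReal) : EReal) - ((∫⁻ a, epos (-(f a)) ∂μ : ENNReal) : EReal)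

/-- The martingale property of a measure `γ(dx,dy)` on `ℝ^d × ℝ^d`: the conditional
expectation of `y` given `x` equals `x`, `γ`-a.s. -/
def MartProp {d : ℕ} (γ : Measure ((Fin d → ℝ) × (Fin d → ℝ))) : Prop :=
  γ[(fun p => p.2) | MeasurableSpace.comap Prod.fst inferInstance] =ᵐ[γ] fun p => p.1

/-- `γ ∈ Γ(ν)`: probability measures on `ℝ^d × ℝ^d` with finite second moment,
`y`-marginal `ν` and the martingale property. -/
def MGamma {d : ℕ} (ν : Measure (Fin d → ℝ))
    (γ : Measure ((Fin d → ℝ) × (Fin d → ℝ))) : Prop :=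
  IsProbabilityMeasure γ ∧ γ.map Prod.snd = ν ∧
    Integrable (fun p => ‖p.1‖ ^ 2 + ‖p.2‖ ^ 2) γ ∧ MartProp γ

/-- Value of the primal problem: `(1/2) ∫ S(x,y) dγ`. -/
def primalVal {d : ℕ} (S : Matrix (Fin d) (Fin d) ℝ)
    (γ : Measure ((Fin d → ℝ) × (Fin d → ℝ))) : ℝ :=
  (1 / 2) * ∫ p, Sb S p.1 p.2 ∂γ

/-- `γ` is an optimal plan for the primal problem. -/
def PrimalOpt {d : ℕ} (S : Matrix (Fin d) (Fin d) ℝ) (ν : Measure (Fin d → ℝ))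
    (γ : Measure ((Fin d → ℝ) × (Fin d → ℝ))) : Prop :=
  MGamma ν γ ∧ ∀ γ', MGamma ν γ' → primalVal S γ' ≤ primalVal S γ

/-- `G` is an optimal set for the dual problem: minimize `∫ ψ_G dν` over maximal
`S`-monotone sets. -/
def DualOpt {d : ℕ} (S : Matrix (Fin d) (Fin d) ℝ) (ν : Measure (Fin d → ℝ))
    (G : Set (Fin d → ℝ)) : Prop :=
  MaxSMono S G ∧ ∀ H, MaxSMono S H → eInt ν (fitz S G) ≤ eInt ν (fitz S H)

/-- The support of a measure: points all of whose neighborhoods have positive measure. -/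
def msupp {α : Type*} [TopologicalSpace α] [MeasurableSpace α] (μ : Measure α) : Set α :=
  {x | ∀ U ∈ nhds x, μ U ≠ 0}

/-- The `S`-projection on `G`: minimizers over `G` of `z ↦ S(z-y,z-y)`. -/
def SProj {d : ℕ} (S : Matrix (Fin d) (Fin d) ℝ) (G : Set (Fin d → ℝ))
    (y : Fin d → ℝ) : Set (Fin d → ℝ) :=
  {x ∈ G | ∀ z ∈ G, Sb S (x - y) (x - y) ≤ Sb S (z - y) (z - y)}

/-- The inverse image of the projection: `P_G^{-1}(x) = {y : x ∈ P_G(y)}`. -/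
def SProjInv {d : ℕ} (S : Matrix (Fin d) (Fin d) ℝ) (G : Set (Fin d → ℝ))
    (x : Fin d → ℝ) : Set (Fin d → ℝ) :=
  {y | x ∈ SProj S G y}

/-- `Q_G(x) = ∪_{n ≥ 1} Q_G^{1/n}(x)`, where
`Q_G^ε(x) = {y ∈ P_G^{-1}(x) : x + ε (x - y) ∈ P_G^{-1}(x)}`. -/
def QG {d : ℕ} (S : Matrix (Fin d) (Fin d) ℝ) (G : Set (Fin d → ℝ))
    (x : Fin d → ℝ) : Set (Fin d → ℝ) :=
  ⋃ n : ℕ, {y ∈ SProjInv S G x |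
    x + ((1 : ℝ) / (n + 1)) • (x - y) ∈ SProjInv S G x}


/-! ### The bilinear form -/

/-- The functional `S(z, ·)` as a continuous linear map. -/
def SbL {d : ℕ} (S : Matrix (Fin d) (Fin d) ℝ) (z : Fin d → ℝ) : (Fin d → ℝ) →L[ℝ] ℝ :=
  LinearMap.toContinuousLinearMap
    { toFun := Sb S z
      map_add' := fun x y => by simp [Sb, Matrix.mulVec_add, dotProduct_add]
      map_smul' := fun c x => by simp [Sb, Matrix.mulVec_smul, dotProduct_smul] }

lemma SbL_apply {d : ℕ} (S : Matrix (Fin d) (Fin d) ℝ) (z y : Fin d → ℝ) :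
    SbL S z y = Sb S z y := rfl

lemma Sb_comm {d : ℕ} {S : Matrix (Fin d) (Fin d) ℝ} (hS : S.IsHermitian) (x y : Fin d → ℝ) :
    Sb S x y = Sb S y x := by
  have h : Sᵀ = S := by
    simpa [Matrix.IsHermitian, Matrix.conjTranspose_eq_transpose_of_trivial] using hS
  unfold Sb
  rw [dotProduct_mulVec, ← mulVec_transpose, h, dotProduct_comm]

lemma Sb_sub_self {d : ℕ} {S : Matrix (Fin d) (Fin d) ℝ} (hS : S.IsHermitian) (x y : Fin d → ℝ) :
    Sb S (x - y) (x - y) = Sb S x x - 2 * Sb S y x + Sb S y y := by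
  have h := Sb_comm hS x y
  unfold Sb at *
  rw [mulVec_sub, sub_dotProduct, dotProduct_sub, dotProduct_sub, h]
  ring

/-- `S(X,Y)` is integrable as soon as `X` and `Y` have second moments dominated by a common
integrable function. -/
lemma integrable_Sb {d : ℕ} {α : Type*} [MeasurableSpace α] {μ : Measure α}
    (S : Matrix (Fin d) (Fin d) ℝ) {X Y : α → Fin d → ℝ} (hX : Measurable X) (hY : Measurable Y)
    {g : α → ℝ} (hg : Integrable g μ) (hXg : ∀ a, ‖X a‖ ^ 2 ≤ g a) (hYg : ∀ a, ‖Y a‖ ^ 2 ≤ g a) :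
    Integrable (fun a => Sb S (X a) (Y a)) μ := by
  simp only [Sb, dotProduct, mulVec, Finset.mul_sum]
  refine integrable_finsetSum _ fun i _ => integrable_finsetSum _ fun j _ => ?_
  have hXi : Measurable fun a => X a i := (measurable_pi_apply i).comp hX
  have hYj : Measurable fun a => Y a j := (measurable_pi_apply j).comp hY
  refine (hg.const_mul |S i j|).mono' (by fun_prop) (Eventually.of_forall fun a => ?_)
  have h1 : |X a i| ≤ ‖X a‖ := norm_le_pi_norm (X a) i
  have h2 : |Y a j| ≤ ‖Y a‖ := norm_le_pi_norm (Y a) j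
  have h3 : |X a i| * |Y a j| ≤ g a := by
    have := mul_le_mul h1 h2 (abs_nonneg _) (norm_nonneg _)
    nlinarith [hXg a, hYg a, sq_nonneg (‖X a‖ - ‖Y a‖)]
  calc ‖X a i * (S i j * Y a j)‖ = |S i j| * (|X a i| * |Y a j|) := by
        rw [Real.norm_eq_abs, abs_mul, abs_mul]; ring
    _ ≤ |S i j| * g a := by gcongr

/-! ### The Fitzpatrick function -/

lemma le_fitz {d : ℕ} (S : Matrix (Fin d) (Fin d) ℝ) {G : Set (Fin d → ℝ)} {z : Fin d → ℝ}
    (hz : z ∈ G) (y : Fin d → ℝ) :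
    ((Sb S z y - Sb S z z / 2 : ℝ) : EReal) ≤ fitz S G y :=
  le_iSup₂ (f := fun x (_ : x ∈ G) => ((Sb S x y - Sb S x x / 2 : ℝ) : EReal)) z hz

lemma measurable_fitz {d : ℕ} (S : Matrix (Fin d) (Fin d) ℝ) (G : Set (Fin d → ℝ)) :
    Measurable (fitz S G) := by
  refine LowerSemicontinuous.measurable (lowerSemicontinuous_biSup fun z _ => ?_)
  refine Continuous.lowerSemicontinuous (continuous_coe_real_ereal.comp ?_)
  exact (SbL S z).continuous.sub continuous_const

/-- A point outside a maximal `S`-monotone set is `S`-incompatible with one of its elements. -/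
lemma MaxSMono.exists_neg {d : ℕ} {S : Matrix (Fin d) (Fin d) ℝ} {G : Set (Fin d → ℝ)}
    (hG : MaxSMono S G) {y : Fin d → ℝ} (hy : y ∉ G) :
    ∃ z ∈ G, Sb S (y - z) (y - z) < 0 := by
  by_contra! h
  refine hy ?_
  rw [← hG.2 (insert y G) ?_ (subset_insert _ _)]
  · exact mem_insert _ _
  · have neg (a b : Fin d → ℝ) : Sb S (a - b) (a - b) = Sb S (b - a) (b - a) := by
      rw [← neg_sub b a]; simp [Sb, mulVec_neg, -neg_sub]
    rintro a (rfl | ha) b (rfl | hb)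
    · simp [Sb]
    · exact h b hb
    · rw [neg]; exact h a ha
    · exact hG.1 a ha b hb

lemma MaxSMono.nonempty {d : ℕ} {S : Matrix (Fin d) (Fin d) ℝ} {G : Set (Fin d → ℝ)}
    (hG : MaxSMono S G) : G.Nonempty := by
  by_cases h : (0 : Fin d → ℝ) ∈ G
  · exact ⟨0, h⟩
  · obtain ⟨z, hz, -⟩ := hG.exists_neg h
    exact ⟨z, hz⟩

lemma half_le_fitz {d : ℕ} {S : Matrix (Fin d) (Fin d) ℝ} (hS : S.IsHermitian)
    {G : Set (Fin d → ℝ)} (hG : MaxSMono S G) (y : Fin d → ℝ) :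
    ((Sb S y y / 2 : ℝ) : EReal) ≤ fitz S G y := by
  by_cases hy : y ∈ G
  · refine le_trans (EReal.coe_le_coe_iff.2 ?_) (le_fitz S hy y)
    linarith
  · obtain ⟨z, hz, hlt⟩ := hG.exists_neg hy
    refine le_trans (EReal.coe_le_coe_iff.2 ?_) (le_fitz S hz y)
    rw [Sb_sub_self hS] at hlt
    linarith

/-! ### Integrals of extended-real-valued functions -/

lemma epos_coe (r : ℝ) : epos (r : EReal) = ENNReal.ofReal r := by
  simp [epos]

lemma epos_mono {a b : EReal} (ha : a ≠ ⊥) (h : a ≤ b) : epos a ≤ epos b := by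
  unfold epos
  split_ifs with h1 h2
  · exact le_rfl
  · exact absurd (top_le_iff.1 (h1 ▸ h)) h2
  · exact le_top
  · exact ENNReal.ofReal_le_ofReal (EReal.toReal_le_toReal h ha ‹_›)

lemma measurable_epos : Measurable epos :=
  Measurable.ite (measurableSet_singleton _) measurable_const
    (ENNReal.measurable_ofReal.comp measurable_ereal_toReal)

lemma epos_neg_anti {r : ℝ} {b : EReal} (h : (r : EReal) ≤ b) :
    epos (-b) ≤ ENNReal.ofReal (-r) := by
  induction b with
  | bot => simp at h
  | top => simp [epos]
  | coe b =>
    rw [← EReal.coe_neg, epos_coe]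
    exact ENNReal.ofReal_le_ofReal (neg_le_neg (EReal.coe_le_coe_iff.1 h))

/-- `eInt` agrees with the Bochner integral on integrable real functions. -/
lemma eInt_coe {α : Type*} [MeasurableSpace α] {μ : Measure α} {f : α → ℝ}
    (hf : Integrable f μ) : eInt μ (fun a => (f a : EReal)) = ((∫ a, f a ∂μ : ℝ) : EReal) := by
  have h1 : ∫⁻ a, ENNReal.ofReal (f a) ∂μ ≠ ⊤ := hf.lintegral_lt_top.ne
  have h2 : ∫⁻ a, ENNReal.ofReal (-f a) ∂μ ≠ ⊤ := hf.neg.lintegral_lt_top.ne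
  rw [integral_eq_lintegral_pos_part_sub_lintegral_neg_part hf, EReal.coe_sub,
    EReal.coe_ennreal_toReal h1, EReal.coe_ennreal_toReal h2]
  simp only [eInt, ← EReal.coe_neg, epos_coe]

lemma eInt_congr {α : Type*} [MeasurableSpace α] {μ : Measure α} {f g : α → EReal}
    (h : ∀ᵐ a ∂μ, f a = g a) : eInt μ f = eInt μ g := by
  unfold eInt
  congr 2 <;> refine lintegral_congr_ae ?_ <;> filter_upwards [h] with a ha <;> rw [ha]

/-- A real integrable minorant of `g` bounds `eInt μ g` from below; `g` need not be measurable. -/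
lemma integral_le_eInt {α : Type*} [MeasurableSpace α] {μ : Measure α} {f : α → ℝ} {g : α → EReal}
    (hf : Integrable f μ) (h : ∀ a, (f a : EReal) ≤ g a) :
    ((∫ a, f a ∂μ : ℝ) : EReal) ≤ eInt μ g := by
  rw [← eInt_coe hf]
  refine EReal.sub_le_sub ?_ ?_
  · exact EReal.coe_ennreal_le_coe_ennreal_iff.2
      (lintegral_mono fun a => epos_mono (EReal.coe_ne_bot _) (h a))
  · refine EReal.coe_ennreal_le_coe_ennreal_iff.2 (lintegral_mono fun a => ?_)
    rw [← EReal.coe_neg, epos_coe]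
    exact epos_neg_anti (h a)

/-- Jensen's inequality for the Fitzpatrick function. -/
lemma fitz_le_eInt {d : ℕ} (S : Matrix (Fin d) (Fin d) ℝ) (G : Set (Fin d → ℝ))
    {κ : Measure (Fin d → ℝ)} [IsProbabilityMeasure κ] (hint : Integrable (fun y => y) κ)
    {x : Fin d → ℝ} (hmean : ∫ y, y ∂κ = x) : fitz S G x ≤ eInt κ (fitz S G) := by
  refine iSup₂_le fun z hz => ?_
  have hL : Integrable (fun y => Sb S z y) κ := (SbL S z).integrable_comp hint
  have h : ∫ y, (Sb S z y - Sb S z z / 2) ∂κ = Sb S z x - Sb S z z / 2 := by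
    rw [integral_sub hL (integrable_const _), integral_const, ← hmean]
    have := (SbL S z).integral_comp_comm hint
    simp only [SbL_apply] at this
    simp [this]
  rw [← h]
  exact integral_le_eInt (hL.sub (integrable_const _)) (le_fitz S hz)

/-- If `g` has an integrable real minorant, then either `eInt μ g = ⊤`, or `g` is a.e. finite and
integrable. -/
lemma eInt_eq_top_or {α : Type*} [MeasurableSpace α] {μ : Measure α} {f : α → ℝ} {g : α → EReal}
    (hg : Measurable g) (hf : Integrable f μ) (h : ∀ a, (f a : EReal) ≤ g a) :
    eInt μ g = ⊤ ∨ ((∀ᵐ a ∂μ, g a = ((g a).toReal : EReal)) ∧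
      Integrable (fun a => (g a).toReal) μ) := by
  have hneg : ∫⁻ a, epos (-(g a)) ∂μ ≠ ⊤ :=
    ((lintegral_mono fun a => epos_neg_anti (h a)).trans_lt hf.neg.lintegral_lt_top).ne
  by_cases hpos : ∫⁻ a, epos (g a) ∂μ = ⊤
  · left
    unfold eInt
    rw [hpos, EReal.coe_ennreal_top]
    exact EReal.top_sub (by simpa using hneg)
  · right
    have hm : Measurable fun a => epos (g a) := measurable_epos.comp hg
    have hfin : ∀ᵐ a ∂μ, g a = ((g a).toReal : EReal) := by
      filter_upwards [ae_lt_top hm hpos] with a ha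
      refine (EReal.coe_toReal ?_ ?_).symm
      · intro h'
        simp [h', epos] at ha
      · exact ne_bot_of_le_ne_bot (EReal.coe_ne_bot _) (h a)
    refine ⟨hfin, (measurable_ereal_toReal.comp hg).aestronglyMeasurable, ?_⟩
    rw [hasFiniteIntegral_iff_norm]
    refine lt_of_le_of_lt (lintegral_mono_ae (g := fun a => epos (g a) + epos (-(g a))) ?_) ?_
    · filter_upwards [hfin] with a ha
      rw [ha, ← EReal.coe_neg, epos_coe, epos_coe, EReal.toReal_coe, Real.norm_eq_abs]
      rcases le_total 0 (g a).toReal with h0 | h0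
      · rw [abs_of_nonneg h0]; exact le_self_add
      · rw [abs_of_nonpos h0]; exact le_add_self
    · rw [lintegral_add_left hm]
      exact ENNReal.add_lt_top.2 ⟨Ne.lt_top hpos, Ne.lt_top hneg⟩

/-! ### The martingale property and the disintegration kernel -/

/-- The martingale property in terms of the disintegration: almost every `γ.condKernel x` has
mean `x`. -/
lemma ae_mean_condKernel {d : ℕ} {γ : Measure ((Fin d → ℝ) × (Fin d → ℝ))}
    [IsProbabilityMeasure γ] (hint : Integrable (fun p => p.2) γ) (hγ : MartProp γ) :
    ∀ᵐ x ∂γ.fst, ∫ y, y ∂(γ.condKernel x) = x := by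
  have h := ProbabilityTheory.condExp_ae_eq_integral_condDistrib' (μ := γ)
    (X := Prod.fst) (Y := Prod.snd) measurable_fst hint
  have hk : ProbabilityTheory.condDistrib (Prod.snd) (Prod.fst) γ = γ.condKernel := by
    rw [ProbabilityTheory.condDistrib]
    simp
  rw [hk] at h
  have hm : StronglyMeasurable fun x : Fin d → ℝ => ∫ y, y ∂(γ.condKernel x) :=
    stronglyMeasurable_id.integral_kernel
  rw [Measure.fst, ae_map_iff measurable_fst.aemeasurable
    (measurableSet_eq_fun hm.measurable measurable_id')]
  filter_upwards [h, hγ] with p h1 h2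
  exact h1.symm.trans h2


/-- Lemma 1: for `γ ∈ Γ(ν)` and a maximal `S`-monotone set `G`:
(i) for `γ.fst`-a.e. `x`, `½S(x,x) ≤ ψ_G(x) ≤ E_γ[ψ_G(y)|x]` (the conditional
expectation being expressed through the disintegration kernel of `γ`); and
(ii) `½∫S(x,y) dγ = ½∫S(x,x) dγ ≤ ∫ψ_G dν`. -/
theorem fitzpatrick_conditional_bounds
    (d m : ℕ) (S : Matrix (Fin d) (Fin d) ℝ) (hS : S.IsHermitian)
    (hrank : IsUnit S.det)
    (hm : Nat.card {i : Fin d // 0 < hS.eigenvalues i} = m)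
    (ν : Measure (Fin d → ℝ)) [IsProbabilityMeasure ν]
    (hν : Integrable (fun y => ‖y‖ ^ 2) ν)
    (γ : Measure ((Fin d → ℝ) × (Fin d → ℝ))) [IsProbabilityMeasure γ]
    (hγ : MGamma ν γ)
    (G : Set (Fin d → ℝ)) (hG : MaxSMono S G) :
    (∀ᵐ x ∂γ.fst,
      ((Sb S x x / 2 : ℝ) : EReal) ≤ fitz S G x ∧
        fitz S G x ≤ eInt (γ.condKernel x) (fitz S G)) ∧
    primalVal S γ = (1 / 2) * ∫ p, Sb S p.1 p.1 ∂γ ∧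
    ((primalVal S γ : ℝ) : EReal) ≤ eInt ν (fitz S G) := by
  obtain ⟨-, hmarg, hmom, hmart⟩ := hγ
  have hsnd : Integrable (fun p => p.2) γ := by
    refine (hmom.add (integrable_const (1 : ℝ))).mono' measurable_snd.aestronglyMeasurable
      (Eventually.of_forall fun p => ?_)
    simp only [Pi.add_apply]
    nlinarith [sq_nonneg (‖p.2‖ - 1), sq_nonneg ‖p.1‖, sq_nonneg ‖p.2‖]
  have hmean := ae_mean_condKernel hsnd hmart
  have hi : ∀ᵐ x ∂γ.fst, ((Sb S x x / 2 : ℝ) : EReal) ≤ fitz S G x ∧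
      fitz S G x ≤ eInt (γ.condKernel x) (fitz S G) := by
    filter_upwards [hmean, hsnd.condKernel_ae] with x hx hxi
    exact ⟨half_le_fitz hS hG x, fitz_le_eInt S G hxi hx⟩
  have hX : ∀ p : (Fin d → ℝ) × (Fin d → ℝ), ‖p.1‖ ^ 2 ≤ ‖p.1‖ ^ 2 + ‖p.2‖ ^ 2 :=
    fun p => le_add_of_nonneg_right (sq_nonneg _)
  have hY : ∀ p : (Fin d → ℝ) × (Fin d → ℝ), ‖p.2‖ ^ 2 ≤ ‖p.1‖ ^ 2 + ‖p.2‖ ^ 2 :=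
    fun p => le_add_of_nonneg_left (sq_nonneg _)
  have hxy := integrable_Sb S measurable_fst measurable_snd hmom hX hY
  have hxx := integrable_Sb S measurable_fst measurable_fst hmom hX hX
  have hcont : Continuous fun x : Fin d → ℝ => Sb S x x := by
    unfold Sb
    fun_prop
  have hxx_fst : Integrable (fun x => Sb S x x) γ.fst :=
    (integrable_map_measure (hcont.aestronglyMeasurable) measurable_fst.aemeasurable).2 hxx
  have hfst : ∫ p, Sb S p.1 p.1 ∂γ = ∫ x, Sb S x x ∂γ.fst :=
    (integral_map measurable_fst.aemeasurable hxx_fst.aestronglyMeasurable).symm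
  have heq : primalVal S γ = (1 / 2) * ∫ p, Sb S p.1 p.1 ∂γ := by
    rw [primalVal, hfst, ← Measure.integral_condKernel hxy]
    congr 1
    refine integral_congr_ae ?_
    filter_upwards [hmean, hsnd.condKernel_ae] with x hx hxi
    have := (SbL S x).integral_comp_comm hxi
    simp only [SbL_apply] at this
    rw [this, hx]
  refine ⟨hi, heq, ?_⟩
  obtain ⟨z, hz⟩ := hG.nonempty
  have hνid : Integrable (fun y => y) ν := by
    rw [← hmarg]
    exact (integrable_map_measure measurable_id.aestronglyMeasurable
      measurable_snd.aemeasurable).2 hsnd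
  have hmin : Integrable (fun y => Sb S z y - Sb S z z / 2) ν :=
    ((SbL S z).integrable_comp hνid).sub (integrable_const _)
  rcases eInt_eq_top_or (measurable_fitz S G) hmin (le_fitz S hz) with htop | ⟨hfin, hint⟩
  · rw [htop]; exact le_top
  have hmT : Measurable fun y => (fitz S G y).toReal :=
    measurable_ereal_toReal.comp (measurable_fitz S G)
  have hintγ : Integrable (fun p : (Fin d → ℝ) × (Fin d → ℝ) => (fitz S G p.2).toReal) γ := by
    rw [← hmarg] at hint
    exact (integrable_map_measure hmT.aestronglyMeasurable measurable_snd.aemeasurable).1 hint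
  have hfinγ : ∀ᵐ x ∂γ.fst, ∀ᵐ y ∂(γ.condKernel x),
      fitz S G y = ((fitz S G y).toReal : EReal) := by
    rw [← hmarg] at hfin
    have h := ae_of_ae_map measurable_snd.aemeasurable hfin
    rw [← γ.disintegrate γ.condKernel] at h
    exact Measure.ae_ae_of_ae_compProd h
  rw [eInt_congr hfin, eInt_coe hint, EReal.coe_le_coe_iff, heq, hfst]
  calc (1 / 2) * ∫ x, Sb S x x ∂γ.fst = ∫ x, (1 / 2) * Sb S x x ∂γ.fst :=
        (integral_const_mul _ _).symm
    _ ≤ ∫ x, ∫ y, (fitz S G y).toReal ∂(γ.condKernel x) ∂γ.fst := by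
        refine integral_mono_ae (hxx_fst.const_mul _) hintγ.integral_condKernel ?_
        filter_upwards [hi, hfinγ, hintγ.condKernel_ae] with x hx hxf hxi
        have h := hx.1.trans hx.2
        rw [eInt_congr hxf, eInt_coe hxi, EReal.coe_le_coe_iff] at h
        linarith
    _ = ∫ p, (fitz S G p.2).toReal ∂γ := Measure.integral_condKernel hintγ
    _ = ∫ y, (fitz S G y).toReal ∂ν := by
        rw [← hmarg]
        exact (integral_map measurable_snd.aemeasurable hmT.aestronglyMeasurable).symm

end
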